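/- arXiv:1704.00749 — 3 statements merged into one kernel-verified Lean document; each statement's English description precedes it below -/
import Mathlib

section
/- Assume strict feasibility of the primal problem. Define Z(ε) = { z ∈ ℝ₊^{4N} : V(z) ≤ ε } and F(ε) = inf{ D(z) : z ∈ Z(ε) }. Then lim_{ε → 0⁺} F(ε) = f*, where f* is the optimal value of the primal problem (which equals D* = sup{D(z) : z ∈ ℝ₊^{4N}} by strong duality). -/
open Matrix

noncomputable section

/-- Euclidean norm of a vector in ℝ^{4N}, represented as four blocks of ℝ^N. -/
def enorm4 {N : ℕ} (w : Fin 4 → Fin N → ℝ) : ℝ :=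
  Real.sqrt (∑ b, ∑ i, w b i ^ 2)

/-- sign(x) = 1 if x ≥ 0 and −1 if x < 0. -/
def sgn (x : ℝ) : ℝ := if 0 ≤ x then 1 else -1

/-- The (linearized) voltage map v(q) = A q + d. -/
def volt {N : ℕ} (A : Matrix (Fin N) (Fin N) ℝ) (d : Fin N → ℝ) (q : Fin N → ℝ) :
    Fin N → ℝ :=
  A *ᵥ q + d

/-- q(z) = λ^min − λ^max + A⁻¹(μ^min − μ^max). -/
def qOf {N : ℕ} (A : Matrix (Fin N) (Fin N) ℝ) (z : Fin 4 → Fin N → ℝ) : Fin N → ℝ :=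
  z 0 - z 1 + A⁻¹ *ᵥ (z 2 - z 3)

/-- ∇D(z) = (v^min − v(q(z)), v(q(z)) − v^max, q^min − q(z), q(z) − q^max). -/
def gradD {N : ℕ} (A : Matrix (Fin N) (Fin N) ℝ) (d vmin vmax qmin qmax : Fin N → ℝ)
    (z : Fin 4 → Fin N → ℝ) : Fin 4 → Fin N → ℝ :=
  ![vmin - volt A d (qOf A z), volt A d (qOf A z) - vmax,
    qmin - qOf A z, qOf A z - qmax]

/-- V(z) = ‖z − ⌈z + ∇D(z)⌉₊‖. -/
def Vfun {N : ℕ} (A : Matrix (Fin N) (Fin N) ℝ) (d vmin vmax qmin qmax : Fin N → ℝ)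
    (z : Fin 4 → Fin N → ℝ) : ℝ :=
  enorm4 (fun b i => z b i - max (z b i + gradD A d vmin vmax qmin qmax z b i) 0)

/-- The Lagrangian dual function
D(z) = inf_q [ (1/2) qᵀAq + (λ^min)ᵀ(v^min − v(q)) + (λ^max)ᵀ(v(q) − v^max)
  + (μ^min)ᵀ(q^min − q) + (μ^max)ᵀ(q − q^max) ]. -/
def dualFun {N : ℕ} (A : Matrix (Fin N) (Fin N) ℝ) (d vmin vmax qmin qmax : Fin N → ℝ)
    (z : Fin 4 → Fin N → ℝ) : ℝ :=
  ⨅ q : Fin N → ℝ,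
    ((1 / 2) * (q ⬝ᵥ A *ᵥ q) + (z 0) ⬝ᵥ (vmin - volt A d q)
      + (z 1) ⬝ᵥ (volt A d q - vmax) + (z 2) ⬝ᵥ (qmin - q) + (z 3) ⬝ᵥ (q - qmax))

/-- fes(q) = Euclidean distance from (q, v(q)) to the box [q^min,q^max] × [v^min,v^max]. -/
def fes {N : ℕ} (A : Matrix (Fin N) (Fin N) ℝ) (d vmin vmax qmin qmax : Fin N → ℝ)
    (q : Fin N → ℝ) : ℝ :=
  sInf { r : ℝ | ∃ y1 y2 : Fin N → ℝ,
    (∀ i, qmin i ≤ y1 i ∧ y1 i ≤ qmax i) ∧ (∀ i, vmin i ≤ y2 i ∧ y2 i ≤ vmax i) ∧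
    r = Real.sqrt ((∑ i, (q i - y1 i) ^ 2) + ∑ i, (volt A d q i - y2 i) ^ 2) }

/-- The primal constraint functions, so that `q` is feasible iff all entries are `≤ 0`. -/
def constr {N : ℕ} (A : Matrix (Fin N) (Fin N) ℝ) (d vmin vmax qmin qmax : Fin N → ℝ)
    (q : Fin N → ℝ) : Fin 4 → Fin N → ℝ :=
  ![vmin - volt A d q, volt A d q - vmax, qmin - q, q - qmax]

/-- The linear part of the dual function. -/
def dualOffset {N : ℕ} (d vmin vmax qmin qmax : Fin N → ℝ) (z : Fin 4 → Fin N → ℝ) : ℝ :=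
  z 0 ⬝ᵥ (vmin - d) + z 1 ⬝ᵥ (d - vmax) + z 2 ⬝ᵥ qmin - z 3 ⬝ᵥ qmax

section

variable {N : ℕ} {A : Matrix (Fin N) (Fin N) ℝ} {d vmin vmax qmin qmax : Fin N → ℝ}

lemma dotProduct_mulVec_comm_of_posDef (hA : A.PosDef) (x y : Fin N → ℝ) :
    x ⬝ᵥ A *ᵥ y = y ⬝ᵥ A *ᵥ x := by
  have hT : Aᵀ = A := by simpa using hA.isHermitian.eq
  rw [dotProduct_mulVec, ← mulVec_transpose, hT, dotProduct_comm]

lemma dotProduct_mulVec_self_nonneg (hA : A.PosDef) (x : Fin N → ℝ) :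
    0 ≤ x ⬝ᵥ A *ᵥ x := by
  simpa using hA.posSemidef.dotProduct_mulVec_nonneg x

lemma qOf_add_smul (z h : Fin 4 → Fin N → ℝ) (t : ℝ) :
    qOf A (z + t • h) = qOf A z + t • qOf A h := by
  simp only [qOf, mulVec_add, mulVec_sub, mulVec_smul, Pi.add_apply, Pi.smul_apply, smul_add,
    smul_sub]
  abel

lemma dualOffset_add_smul (z h : Fin 4 → Fin N → ℝ) (t : ℝ) :
    dualOffset d vmin vmax qmin qmax (z + t • h) =
      dualOffset d vmin vmax qmin qmax z + t * dualOffset d vmin vmax qmin qmax h := by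
  simp only [dualOffset, Pi.add_apply, Pi.smul_apply, add_dotProduct, smul_dotProduct, smul_eq_mul]
  ring

lemma sum_mul_constr (hA : A.PosDef) (z : Fin 4 → Fin N → ℝ) (q : Fin N → ℝ) :
    ∑ b, ∑ i, z b i * constr A d vmin vmax qmin qmax q b i =
      dualOffset d vmin vmax qmin qmax z - qOf A z ⬝ᵥ A *ᵥ q := by
  have hu : IsUnit A.det := (Matrix.isUnit_iff_isUnit_det A).1 hA.isUnit
  have h1 : ∀ x : Fin N → ℝ, (A⁻¹ *ᵥ x) ⬝ᵥ A *ᵥ q = x ⬝ᵥ q := fun x => by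
    rw [dotProduct_mulVec_comm_of_posDef hA, mulVec_mulVec, Matrix.mul_nonsing_inv _ hu,
      one_mulVec, dotProduct_comm]
  change ∑ b, z b ⬝ᵥ constr A d vmin vmax qmin qmax q b = _
  simp only [Fin.sum_univ_four, constr, dualOffset, qOf, volt, add_dotProduct, h1, sub_dotProduct,
    dotProduct_sub, dotProduct_add, Matrix.cons_val]
  ring

lemma dualFun_eq (hA : A.PosDef) (z : Fin 4 → Fin N → ℝ) :
    dualFun A d vmin vmax qmin qmax z =
      dualOffset d vmin vmax qmin qmax z - 1 / 2 * (qOf A z ⬝ᵥ A *ᵥ qOf A z) := by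
  have key : ∀ q : Fin N → ℝ,
      (1 / 2) * (q ⬝ᵥ A *ᵥ q) + (z 0) ⬝ᵥ (vmin - volt A d q)
      + (z 1) ⬝ᵥ (volt A d q - vmax) + (z 2) ⬝ᵥ (qmin - q) + (z 3) ⬝ᵥ (q - qmax) =
      dualOffset d vmin vmax qmin qmax z - 1 / 2 * (qOf A z ⬝ᵥ A *ᵥ qOf A z)
        + 1 / 2 * ((q - qOf A z) ⬝ᵥ A *ᵥ (q - qOf A z)) := by
    intro q
    have h := sum_mul_constr (d := d) (vmin := vmin) (vmax := vmax) (qmin := qmin) (qmax := qmax)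
      hA z q
    change ∑ b, z b ⬝ᵥ constr A d vmin vmax qmin qmax q b = _ at h
    simp only [Fin.sum_univ_four, constr, Matrix.cons_val] at h
    have hc := dotProduct_mulVec_comm_of_posDef hA q (qOf A z)
    simp only [mulVec_sub, sub_dotProduct, dotProduct_sub] at h ⊢
    linarith
  unfold dualFun
  simp only [key]
  refine le_antisymm ?_ (le_ciInf fun q => ?_)
  · refine (ciInf_le ⟨dualOffset d vmin vmax qmin qmax z
      - 1 / 2 * (qOf A z ⬝ᵥ A *ᵥ qOf A z), ?_⟩ (qOf A z)).trans (by simp)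
    rintro _ ⟨q, rfl⟩
    have := dotProduct_mulVec_self_nonneg hA (q - qOf A z)
    dsimp only
    linarith
  · have := dotProduct_mulVec_self_nonneg hA (q - qOf A z)
    linarith

lemma dualFun_eq_lagrangian (hA : A.PosDef) (z : Fin 4 → Fin N → ℝ) :
    dualFun A d vmin vmax qmin qmax z = 1 / 2 * (qOf A z ⬝ᵥ A *ᵥ qOf A z)
      + ∑ b, ∑ i, z b i * gradD A d vmin vmax qmin qmax z b i := by
  have h := sum_mul_constr (d := d) (vmin := vmin) (vmax := vmax) (qmin := qmin) (qmax := qmax)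
    hA z (qOf A z)
  change ∑ b, ∑ i, z b i * gradD A d vmin vmax qmin qmax z b i = _ at h
  rw [dualFun_eq hA, h]
  ring

lemma dualFun_le_lagrangian (hA : A.PosDef) (z : Fin 4 → Fin N → ℝ) (q : Fin N → ℝ) :
    dualFun A d vmin vmax qmin qmax z ≤ 1 / 2 * (q ⬝ᵥ A *ᵥ q)
      + ∑ b, ∑ i, z b i * constr A d vmin vmax qmin qmax q b i := by
  rw [dualFun_eq hA, sum_mul_constr hA]
  have h := dotProduct_mulVec_self_nonneg hA (q - qOf A z)
  have hc := dotProduct_mulVec_comm_of_posDef hA q (qOf A z)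
  simp only [mulVec_sub, sub_dotProduct, dotProduct_sub] at h
  linarith

/-- The dual function is quadratic along every line. -/
lemma dualFun_add_smul (hA : A.PosDef) (z h : Fin 4 → Fin N → ℝ) (t : ℝ) :
    dualFun A d vmin vmax qmin qmax (z + t • h) = dualFun A d vmin vmax qmin qmax z
      + t * ∑ b, ∑ i, h b i * gradD A d vmin vmax qmin qmax z b i
      - t ^ 2 / 2 * (qOf A h ⬝ᵥ A *ᵥ qOf A h) := by
  have hs := sum_mul_constr (d := d) (vmin := vmin) (vmax := vmax) (qmin := qmin) (qmax := qmax)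
    hA h (qOf A z)
  change ∑ b, ∑ i, h b i * gradD A d vmin vmax qmin qmax z b i = _ at hs
  have hc := dotProduct_mulVec_comm_of_posDef hA (qOf A h) (qOf A z)
  rw [hs, dualFun_eq hA, dualFun_eq hA, qOf_add_smul, dualOffset_add_smul]
  simp only [mulVec_add, mulVec_smul, add_dotProduct, dotProduct_add, smul_dotProduct,
    dotProduct_smul, smul_eq_mul, hc]
  ring

lemma continuous_qOf : Continuous (qOf A) := by
  unfold qOf
  fun_prop

lemma continuous_constr : Continuous (constr A d vmin vmax qmin qmax) := by
  refine continuous_pi fun b => ?_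
  fin_cases b <;> simp only [constr, volt] <;> dsimp <;> fun_prop

lemma continuous_dualFun (hA : A.PosDef) : Continuous (dualFun A d vmin vmax qmin qmax) := by
  have h : dualFun A d vmin vmax qmin qmax = fun z => dualOffset d vmin vmax qmin qmax z
      - 1 / 2 * (qOf A z ⬝ᵥ A *ᵥ qOf A z) := funext fun z => dualFun_eq hA z
  have hq : Continuous (qOf A) := continuous_qOf
  rw [h]
  unfold dualOffset
  fun_prop

lemma constr_nonpos_iff {q : Fin N → ℝ} :
    (∀ b i, constr A d vmin vmax qmin qmax q b i ≤ 0) ↔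
      (∀ i, qmin i ≤ q i ∧ q i ≤ qmax i) ∧
        ∀ i, vmin i ≤ volt A d q i ∧ volt A d q i ≤ vmax i := by
  simp only [Fin.forall_fin_succ, constr]
  simp [forall_and]
  tauto

lemma exists_uniform_slack
    (hstrict : ∃ q : Fin N → ℝ, (∀ i, qmin i < q i ∧ q i < qmax i) ∧
      ∀ i, vmin i < volt A d q i ∧ volt A d q i < vmax i) :
    ∃ (q : Fin N → ℝ) (s : ℝ), 0 < s ∧
      ∀ b i, constr A d vmin vmax qmin qmax q b i ≤ -s := by
  obtain ⟨q, hq, hv⟩ := hstrict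
  have hneg : ∀ p : Fin 4 × Fin N, 0 < -constr A d vmin vmax qmin qmax q p.1 p.2 := by
    rintro ⟨b, i⟩
    have := hq i
    have := hv i
    fin_cases b <;> simp [constr] <;> linarith
  obtain ⟨s, hs, hle⟩ : ∃ s : ℝ, 0 < s ∧
      ∀ p : Fin 4 × Fin N, s ≤ -constr A d vmin vmax qmin qmax q p.1 p.2 := by
    rcases isEmpty_or_nonempty (Fin 4 × Fin N) with _ | _
    · exact ⟨1, one_pos, fun p => isEmptyElim p⟩
    · obtain ⟨p, hp⟩ := Finite.exists_min
        fun p : Fin 4 × Fin N => -constr A d vmin vmax qmin qmax q p.1 p.2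
      exact ⟨_, hneg p, hp⟩
  exact ⟨q, s, hs, fun b i => by linarith [hle (b, i)]⟩

lemma dualFun_le_of_slack (hA : A.PosDef) {q : Fin N → ℝ} {s : ℝ}
    (hs : ∀ b i, constr A d vmin vmax qmin qmax q b i ≤ -s)
    {z : Fin 4 → Fin N → ℝ} (hz : ∀ b i, 0 ≤ z b i) :
    dualFun A d vmin vmax qmin qmax z ≤
      1 / 2 * (q ⬝ᵥ A *ᵥ q) - s * ∑ b, ∑ i, z b i := by
  have h : ∑ b, ∑ i, z b i * constr A d vmin vmax qmin qmax q b i ≤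
      ∑ b, ∑ i, (-s) * z b i :=
    Finset.sum_le_sum fun b _ => Finset.sum_le_sum fun i _ => by
      nlinarith [mul_le_mul_of_nonneg_left (hs b i) (hz b i)]
  simp only [← Finset.mul_sum] at h
  linarith [dualFun_le_lagrangian (d := d) (vmin := vmin) (vmax := vmax) (qmin := qmin)
    (qmax := qmax) hA z q]

lemma le_sum_sum {z : Fin 4 → Fin N → ℝ} (hz : ∀ b i, 0 ≤ z b i) (b : Fin 4) (i : Fin N) :
    z b i ≤ ∑ b, ∑ i, z b i :=
  (Finset.single_le_sum (fun j _ => hz b j) (Finset.mem_univ i)).trans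
    (Finset.single_le_sum (f := fun b => ∑ i, z b i)
      (fun c _ => Finset.sum_nonneg fun j _ => hz c j) (Finset.mem_univ b))

/-- Under strict feasibility the dual function attains its maximum over the orthant. -/
lemma exists_dualFun_max (hA : A.PosDef) {q : Fin N → ℝ} {s : ℝ} (hs0 : 0 < s)
    (hs : ∀ b i, constr A d vmin vmax qmin qmax q b i ≤ -s) :
    ∃ z : Fin 4 → Fin N → ℝ, (∀ b i, 0 ≤ z b i) ∧ ∀ y : Fin 4 → Fin N → ℝ,
      (∀ b i, 0 ≤ y b i) →
        dualFun A d vmin vmax qmin qmax y ≤ dualFun A d vmin vmax qmin qmax z := by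
  set D := dualFun A d vmin vmax qmin qmax with hD
  have h0 : D 0 ≤ 1 / 2 * (q ⬝ᵥ A *ᵥ q) := by
    simpa using dualFun_le_of_slack hA hs (z := 0) (fun _ _ => le_rfl)
  set R := (1 / 2 * (q ⬝ᵥ A *ᵥ q) - D 0) / s with hR
  have hR0 : 0 ≤ R := div_nonneg (by linarith) hs0.le
  have hRs : R * s = 1 / 2 * (q ⬝ᵥ A *ᵥ q) - D 0 := div_mul_cancel₀ _ hs0.ne'
  have h0mem : (0 : Fin 4 → Fin N → ℝ) ∈ Set.Icc (0 : Fin 4 → Fin N → ℝ) (fun _ _ => R) :=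
    ⟨le_rfl, fun _ _ => hR0⟩
  obtain ⟨z, hz, hmax⟩ := (isCompact_Icc (a := (0 : Fin 4 → Fin N → ℝ))
    (b := fun _ _ => R)).exists_isMaxOn ⟨0, h0mem⟩
    (continuous_dualFun (d := d) (vmin := vmin) (vmax := vmax) (qmin := qmin)
      (qmax := qmax) hA).continuousOn
  refine ⟨z, fun b i => hz.1 b i, fun y hy => ?_⟩
  by_cases hyR : ∀ b i, y b i ≤ R
  · exact hmax ⟨fun b i => hy b i, fun b i => hyR b i⟩
  · push Not at hyR
    obtain ⟨b, i, hbi⟩ := hyR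
    have h1 := dualFun_le_of_slack hA hs hy
    have h2 := le_sum_sum hy b i
    have h3 : D 0 ≤ D z := hmax h0mem
    have h4 : R * s ≤ s * ∑ b, ∑ i, y b i := by
      rw [mul_comm]
      exact mul_le_mul_of_nonneg_left (hbi.le.trans h2) hs0.le
    linarith

lemma Vfun_eq_zero_of_isMax (hA : A.PosDef) {z : Fin 4 → Fin N → ℝ}
    (hz : ∀ b i, 0 ≤ z b i) (hmax : ∀ y : Fin 4 → Fin N → ℝ, (∀ b i, 0 ≤ y b i) →
      dualFun A d vmin vmax qmin qmax y ≤ dualFun A d vmin vmax qmin qmax z) :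
    Vfun A d vmin vmax qmin qmax z = 0 := by
  set g := gradD A d vmin vmax qmin qmax z with hg
  set w : Fin 4 → Fin N → ℝ := fun b i => z b i - max (z b i + g b i) 0 with hw
  set W := ∑ b, ∑ i, w b i ^ 2 with hW
  have hW0 : 0 ≤ W := Finset.sum_nonneg fun _ _ => Finset.sum_nonneg fun _ _ => sq_nonneg _
  have hdir : W ≤ ∑ b, ∑ i, (-w) b i * g b i :=
    Finset.sum_le_sum fun b _ => Finset.sum_le_sum fun i _ => by
      simp only [hw, Pi.neg_apply]
      rcases max_cases (z b i + g b i) 0 with ⟨h, h'⟩ | ⟨h, h'⟩ <;> rw [h]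
      · nlinarith
      · nlinarith [hz b i]
  set c := qOf A (-w) ⬝ᵥ A *ᵥ qOf A (-w) with hc
  have hc0 : 0 ≤ c := dotProduct_mulVec_self_nonneg hA _
  have hstep : ∀ t : ℝ, 0 < t → t ≤ 1 → W ≤ t / 2 * c := by
    intro t ht ht1
    have hle := hmax (z + t • -w) fun b i => by
      have h1 : 0 ≤ max (z b i + g b i) 0 := le_max_right _ _
      simp only [hw, Pi.add_apply, Pi.smul_apply, Pi.neg_apply, smul_eq_mul]
      nlinarith [hz b i, mul_nonneg ht.le h1, mul_nonneg (sub_nonneg.2 ht1) (hz b i)]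
    rw [dualFun_add_smul hA] at hle
    have h2 : t * W ≤ t * (t / 2 * c) := by
      have := mul_le_mul_of_nonneg_left hdir ht.le
      nlinarith
    exact le_of_mul_le_mul_left h2 ht
  have hWz : W = 0 := by
    refine le_antisymm ?_ hW0
    by_contra! hpos
    have h1 := hstep (W / (W + c)) (by positivity) ((div_le_one (by positivity)).2 (by linarith))
    have h2 : W / (W + c) / 2 * c = W * c / (2 * (W + c)) := by field_simp
    rw [h2, le_div_iff₀ (by positivity)] at h1
    nlinarith [mul_pos hpos hpos, mul_nonneg hW0 hc0]
  change Real.sqrt W = 0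
  rw [hWz, Real.sqrt_zero]

lemma abs_le_Vfun (z : Fin 4 → Fin N → ℝ) (b : Fin 4) (i : Fin N) :
    |z b i - max (z b i + gradD A d vmin vmax qmin qmax z b i) 0| ≤
      Vfun A d vmin vmax qmin qmax z := by
  unfold Vfun enorm4
  exact Real.abs_le_sqrt (le_sum_sum (z := fun b i =>
    (z b i - max (z b i + gradD A d vmin vmax qmin qmax z b i) 0) ^ 2)
      (fun _ _ => sq_nonneg _) b i)

lemma constr_convexComb (p q : Fin N → ℝ) (t : ℝ) (b : Fin 4) (i : Fin N) :
    constr A d vmin vmax qmin qmax (p + t • (q - p)) b i =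
      (1 - t) * constr A d vmin vmax qmin qmax p b i
        + t * constr A d vmin vmax qmin qmax q b i := by
  fin_cases b <;> simp [constr, volt, mulVec_add, mulVec_smul, mulVec_sub] <;> ring

/-- A point violating the constraints by at most `ε` is almost as costly as the optimum. -/
lemma primal_value_ge_of_relaxed (hA : A.PosDef) {q₀ : Fin N → ℝ} {s ε f : ℝ} (hs0 : 0 < s)
    (hs : ∀ b i, constr A d vmin vmax qmin qmax q₀ b i ≤ -s)
    (hf : ∀ q : Fin N → ℝ, (∀ b i, constr A d vmin vmax qmin qmax q b i ≤ 0) →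
      f ≤ 1 / 2 * (q ⬝ᵥ A *ᵥ q))
    (hε : 0 < ε) {p : Fin N → ℝ} (hp : ∀ b i, constr A d vmin vmax qmin qmax p b i ≤ ε) :
    f - ε * (1 / 2 * (q₀ ⬝ᵥ A *ᵥ q₀) / s) ≤ 1 / 2 * (p ⬝ᵥ A *ᵥ p) := by
  set t := ε / (ε + s) with ht
  have ht0 : 0 ≤ t := by positivity
  have ht1 : t ≤ 1 := (div_le_one (by positivity)).2 (by linarith)
  have hts : t ≤ ε / s := div_le_div_of_nonneg_left hε.le hs0 (by linarith)
  have hbal : (1 - t) * ε = t * s := by rw [ht]; field_simp; ring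
  have hfeas := hf (p + t • (q₀ - p)) fun b i => by
    rw [constr_convexComb]
    nlinarith [mul_le_mul_of_nonneg_left (hp b i) (sub_nonneg.2 ht1),
      mul_le_mul_of_nonneg_left (hs b i) ht0]
  have hc := dotProduct_mulVec_comm_of_posDef hA p q₀
  have hdiff := dotProduct_mulVec_self_nonneg hA (q₀ - p)
  have hp0 := dotProduct_mulVec_self_nonneg hA p
  have hq0 := dotProduct_mulVec_self_nonneg hA q₀
  simp only [mulVec_add, mulVec_smul, mulVec_sub, add_dotProduct, dotProduct_add, smul_dotProduct,
    dotProduct_smul, sub_dotProduct, dotProduct_sub, smul_eq_mul, hc] at hfeas hdiff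
  have h1 := mul_nonneg (mul_nonneg ht0 (sub_nonneg.2 ht1)) hdiff
  have h2 := mul_nonneg ht0 hp0
  have h3 := mul_le_mul_of_nonneg_right hts hq0
  have h4 : ε * (1 / 2 * (q₀ ⬝ᵥ A *ᵥ q₀) / s) = 1 / 2 * (ε / s * (q₀ ⬝ᵥ A *ᵥ q₀)) := by ring
  rw [h4]
  nlinarith

lemma exists_constr_bound :
    ∃ C : ℝ, 0 ≤ C ∧ ∀ q : Fin N → ℝ, (∀ b i, constr A d vmin vmax qmin qmax q b i ≤ 1) →
      ∀ b i, |constr A d vmin vmax qmin qmax q b i| ≤ C := by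
  obtain ⟨C, hC⟩ := (isCompact_Icc (a := qmin - 1) (b := qmax + 1)).exists_bound_of_continuousOn
    (continuous_constr (A := A) (d := d) (vmin := vmin) (vmax := vmax) (qmin := qmin)
      (qmax := qmax)).continuousOn
  refine ⟨max C 0, le_max_right _ _, fun q hq b i => ?_⟩
  have hmem : q ∈ Set.Icc (qmin - 1) (qmax + 1) := by
    refine ⟨fun j => ?_, fun j => ?_⟩
    · have := hq 2 j
      simp [constr] at this ⊢
      linarith
    · have := hq 3 j
      simp [constr] at this ⊢
      linarith
  rw [← Real.norm_eq_abs]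
  exact (((norm_le_pi_norm _ i).trans (norm_le_pi_norm _ b)).trans (hC q hmem)).trans
    (le_max_left _ _)

/-- Approximate dual stationarity bounds the dual value below, with a linear error. -/
lemma exists_dualFun_ge (hA : A.PosDef) {q₀ : Fin N → ℝ} {s f : ℝ} (hs0 : 0 < s)
    (hs : ∀ b i, constr A d vmin vmax qmin qmax q₀ b i ≤ -s)
    (hf : ∀ q : Fin N → ℝ, (∀ b i, constr A d vmin vmax qmin qmax q b i ≤ 0) →
      f ≤ 1 / 2 * (q ⬝ᵥ A *ᵥ q)) :
    ∃ K ε₀ : ℝ, 0 < ε₀ ∧ ∀ ε, 0 < ε → ε ≤ ε₀ → ∀ z : Fin 4 → Fin N → ℝ,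
      (∀ b i, 0 ≤ z b i) → Vfun A d vmin vmax qmin qmax z ≤ ε →
        f - K * ε ≤ dualFun A d vmin vmax qmin qmax z := by
  obtain ⟨C, hC0, hC⟩ := exists_constr_bound (A := A) (d := d) (vmin := vmin) (vmax := vmax)
    (qmin := qmin) (qmax := qmax)
  set M : ℝ := ∑ _b : Fin 4, ∑ _i : Fin N, C with hM
  have hM0 : 0 ≤ M := Finset.sum_nonneg fun _ _ => Finset.sum_nonneg fun _ _ => hC0
  set f₀ := 1 / 2 * (q₀ ⬝ᵥ A *ᵥ q₀) with hf₀
  refine ⟨f₀ / s + 2 * (f₀ + M) / s + M, min 1 (s / 2), by positivity,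
    fun ε hε hεle z hz hV => ?_⟩
  have hε1 : ε ≤ 1 := hεle.trans (min_le_left _ _)
  have hεs : ε ≤ s / 2 := hεle.trans (min_le_right _ _)
  have hw : ∀ b i, |z b i - max (z b i + gradD A d vmin vmax qmin qmax z b i) 0| ≤ ε :=
    fun b i => (abs_le_Vfun z b i).trans hV
  have hviol : ∀ b i, constr A d vmin vmax qmin qmax (qOf A z) b i ≤ ε := fun b i => by
    have h1 := (abs_le.1 (hw b i)).1
    have h2 := le_max_left (z b i + gradD A d vmin vmax qmin qmax z b i) 0
    change gradD A d vmin vmax qmin qmax z b i ≤ ε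
    linarith
  have hgC : ∀ b i, |gradD A d vmin vmax qmin qmax z b i| ≤ C :=
    hC (qOf A z) fun b i => (hviol b i).trans hε1
  have hslack : ∑ b, ∑ i, -(ε * (z b i + C)) ≤
      ∑ b, ∑ i, z b i * gradD A d vmin vmax qmin qmax z b i :=
    Finset.sum_le_sum fun b _ => Finset.sum_le_sum fun i _ => by
      have h1 := abs_le.1 (hw b i)
      have h2 := abs_le.1 (hgC b i)
      have hzn := hz b i
      rcases max_cases (z b i + gradD A d vmin vmax qmin qmax z b i) 0 with ⟨h, h'⟩ | ⟨h, h'⟩ <;>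
        rw [h] at h1
      · nlinarith [mul_nonneg hε.le hC0]
      · nlinarith [mul_nonneg hε.le hzn, mul_nonneg hε.le hC0]
  simp only [Finset.sum_neg_distrib, ← Finset.mul_sum, Finset.sum_add_distrib, ← hM] at hslack
  set S := ∑ b, ∑ i, z b i with hS
  have hD := dualFun_eq_lagrangian (d := d) (vmin := vmin) (vmax := vmax) (qmin := qmin)
    (qmax := qmax) hA z
  have hup : dualFun A d vmin vmax qmin qmax z ≤ f₀ - s * S := dualFun_le_of_slack hA hs hz
  have hS0 : 0 ≤ S := Finset.sum_nonneg fun b _ => Finset.sum_nonneg fun i _ => hz b i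
  have hp0 := dotProduct_mulVec_self_nonneg hA (qOf A z)
  have hSle : S ≤ 2 * (f₀ + M) / s := by
    rw [le_div_iff₀ hs0]
    nlinarith [mul_le_mul_of_nonneg_right hεs hS0, mul_le_mul_of_nonneg_right hε1 hM0]
  have hprimal : f - ε * (f₀ / s) ≤ _ := primal_value_ge_of_relaxed hA hs0 hs hf hε hviol
  nlinarith [mul_le_mul_of_nonneg_left hSle hε.le]

end

/-- Proposition 4(b): under strict feasibility, F(ε) = inf{D(z) : z ∈ ℝ₊^{4N}, V(z) ≤ ε}
tends, as ε → 0⁺, to the optimal value f* of the primal problem. -/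
theorem stmt_14 (N : ℕ) (hN : 0 < N) (A : Matrix (Fin N) (Fin N) ℝ) (hA : A.PosDef)
    (d vmin vmax qmin qmax : Fin N → ℝ)
    (hv : ∀ i, vmin i ≤ vmax i) (hq : ∀ i, qmin i ≤ qmax i)
    (hstrict : ∃ q : Fin N → ℝ, (∀ i, qmin i < q i ∧ q i < qmax i) ∧
      ∀ i, vmin i < volt A d q i ∧ volt A d q i < vmax i) :
    Filter.Tendsto
      (fun ε : ℝ => sInf (dualFun A d vmin vmax qmin qmax ''
        {z : Fin 4 → Fin N → ℝ | (∀ b i, 0 ≤ z b i) ∧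
          Vfun A d vmin vmax qmin qmax z ≤ ε}))
      (nhdsWithin 0 (Set.Ioi 0))
      (nhds (sInf ((fun q : Fin N → ℝ => (1 / 2) * (q ⬝ᵥ A *ᵥ q)) ''
        {q : Fin N → ℝ | (∀ i, qmin i ≤ q i ∧ q i ≤ qmax i) ∧
          ∀ i, vmin i ≤ volt A d q i ∧ volt A d q i ≤ vmax i}))) := by
  obtain ⟨q₀, s, hs0, hs⟩ := exists_uniform_slack hstrict
  simp only [← constr_nonpos_iff]
  set P := (fun q : Fin N → ℝ => (1 / 2) * (q ⬝ᵥ A *ᵥ q)) ''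
    {q : Fin N → ℝ | ∀ b i, constr A d vmin vmax qmin qmax q b i ≤ 0} with hP
  have hPne : P.Nonempty := ⟨_, q₀, fun b i => (hs b i).trans (by linarith), rfl⟩
  have hPbdd : BddBelow P := by
    refine ⟨0, ?_⟩
    rintro _ ⟨q, -, rfl⟩
    have := dotProduct_mulVec_self_nonneg hA q
    dsimp only
    linarith
  have hf : ∀ q : Fin N → ℝ, (∀ b i, constr A d vmin vmax qmin qmax q b i ≤ 0) →
      sInf P ≤ 1 / 2 * (q ⬝ᵥ A *ᵥ q) := fun q hq => csInf_le hPbdd ⟨q, hq, rfl⟩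
  have hweak : ∀ z : Fin 4 → Fin N → ℝ, (∀ b i, 0 ≤ z b i) →
      dualFun A d vmin vmax qmin qmax z ≤ sInf P := fun z hz => by
    refine le_csInf hPne ?_
    rintro _ ⟨q, hq, rfl⟩
    simpa using dualFun_le_of_slack hA (s := 0) (fun b i => by simpa using hq b i) hz
  obtain ⟨z, hz, hmax⟩ := exists_dualFun_max hA hs0 hs
  have hVz := Vfun_eq_zero_of_isMax hA hz hmax
  obtain ⟨K, ε₀, hε₀, hlow⟩ := exists_dualFun_ge hA hs0 hs hf
  have hlim : Filter.Tendsto (fun ε : ℝ => sInf P - K * ε) (nhdsWithin 0 (Set.Ioi 0))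
      (nhds (sInf P)) := by
    have h : Continuous fun ε : ℝ => sInf P - K * ε := by fun_prop
    simpa using (h.tendsto 0).mono_left nhdsWithin_le_nhds
  have hev : ∀ᶠ ε in nhdsWithin (0 : ℝ) (Set.Ioi 0), 0 < ε ∧ ε ≤ ε₀ := Ioc_mem_nhdsGT hε₀
  refine tendsto_of_tendsto_of_tendsto_of_le_of_le' hlim tendsto_const_nhds ?_ ?_
  · filter_upwards [hev] with ε hε
    refine le_csInf ⟨_, z, ⟨hz, hVz.le.trans hε.1.le⟩, rfl⟩ ?_
    rintro _ ⟨y, ⟨hy, hVy⟩, rfl⟩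
    exact hlow ε hε.1 hε.2 y hy hVy
  · filter_upwards [hev] with ε hε
    refine le_trans (csInf_le ⟨sInf P - K * ε, ?_⟩
      (Set.mem_image_of_mem _ ⟨hz, hVz.le.trans hε.1.le⟩)) (hweak z hz)
    rintro _ ⟨y, ⟨hy, hVy⟩, rfl⟩
    exact hlow ε hε.1 hε.2 y hy hVy

end
end

section
/- Suppose the set Z* of maximizers of the dual function D over ℝ₊^{4N} is nonempty. Then for every z* ∈ Z* and every z ∈ ℝ₊^{4N} with z ∉ Z*, it holds that ⟨∇D(z), z* − z⟩ > 0. -/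
open Matrix

noncomputable section

/-- The Lagrangian, whose infimum over `q` is the dual function. -/
def lagrangian {N : ℕ} (A : Matrix (Fin N) (Fin N) ℝ) (d vmin vmax qmin qmax : Fin N → ℝ)
    (z : Fin 4 → Fin N → ℝ) (q : Fin N → ℝ) : ℝ :=
  (1 / 2) * (q ⬝ᵥ A *ᵥ q) + (z 0) ⬝ᵥ (vmin - volt A d q)
    + (z 1) ⬝ᵥ (volt A d q - vmax) + (z 2) ⬝ᵥ (qmin - q) + (z 3) ⬝ᵥ (q - qmax)

/-- `qOf A z` minimizes the Lagrangian. -/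
lemma lagrangian_qOf_le {N : ℕ} {A : Matrix (Fin N) (Fin N) ℝ} (hA : A.PosDef)
    (d vmin vmax qmin qmax : Fin N → ℝ) (z : Fin 4 → Fin N → ℝ) (q : Fin N → ℝ) :
    lagrangian A d vmin vmax qmin qmax z (qOf A z) ≤ lagrangian A d vmin vmax qmin qmax z q := by
  have hsymm (x y : Fin N → ℝ) : x ⬝ᵥ A *ᵥ y = y ⬝ᵥ A *ᵥ x := by
    have hT : Aᵀ = A := by simpa using hA.isHermitian.eq
    rw [dotProduct_mulVec, ← mulVec_transpose, hT, dotProduct_comm]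
  have hAm : A *ᵥ qOf A z = A *ᵥ (z 0 - z 1) + (z 2 - z 3) := by
    rw [qOf, mulVec_add, mulVec_mulVec,
      Matrix.mul_nonsing_inv A ((Matrix.isUnit_iff_isUnit_det A).mp hA.isUnit), one_mulVec]
  have hlin (x : Fin N → ℝ) : x ⬝ᵥ A *ᵥ qOf A z =
      z 0 ⬝ᵥ A *ᵥ x - z 1 ⬝ᵥ A *ᵥ x + z 2 ⬝ᵥ x - z 3 ⬝ᵥ x := by
    rw [hAm, dotProduct_add, hsymm, sub_dotProduct, dotProduct_comm x, sub_dotProduct]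
    ring
  have hpos : 0 ≤ (q - qOf A z) ⬝ᵥ A *ᵥ (q - qOf A z) := by
    simpa using hA.posSemidef.dotProduct_mulVec_nonneg (q - qOf A z)
  have h1 := hlin q
  have h2 := hlin (qOf A z)
  have h3 := hsymm q (qOf A z)
  simp only [mulVec_sub, dotProduct_sub, sub_dotProduct] at hpos
  simp only [lagrangian, volt, dotProduct_sub, dotProduct_add]
  linarith

/-- The Lagrangian is affine in `z`, with slope `gradD` at the minimizer `qOf A z`. -/
lemma lagrangian_qOf_eq_add_gradD {N : ℕ} (A : Matrix (Fin N) (Fin N) ℝ)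
    (d vmin vmax qmin qmax : Fin N → ℝ) (z w : Fin 4 → Fin N → ℝ) :
    lagrangian A d vmin vmax qmin qmax w (qOf A z) =
      lagrangian A d vmin vmax qmin qmax z (qOf A z) +
        ∑ b, ∑ i, gradD A d vmin vmax qmin qmax z b i * (w b i - z b i) := by
  have hsum : ∑ b, ∑ i, gradD A d vmin vmax qmin qmax z b i * (w b i - z b i) =
      ∑ b, (w b - z b) ⬝ᵥ gradD A d vmin vmax qmin qmax z b := by
    simp only [dotProduct, Pi.sub_apply, mul_comm]
  rw [hsum, Fin.sum_univ_four]
  simp only [gradD, lagrangian, sub_dotProduct, Matrix.cons_val]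
  ring

/-- The supergradient inequality for the concave function `dualFun`. -/
lemma dualFun_le_add_gradD {N : ℕ} {A : Matrix (Fin N) (Fin N) ℝ} (hA : A.PosDef)
    (d vmin vmax qmin qmax : Fin N → ℝ) (z w : Fin 4 → Fin N → ℝ) :
    dualFun A d vmin vmax qmin qmax w ≤ dualFun A d vmin vmax qmin qmax z +
      ∑ b, ∑ i, gradD A d vmin vmax qmin qmax z b i * (w b i - z b i) := by
  have hle : dualFun A d vmin vmax qmin qmax w ≤
      lagrangian A d vmin vmax qmin qmax w (qOf A z) :=
    ciInf_le ⟨_, Set.forall_mem_range.2 (lagrangian_qOf_le hA d vmin vmax qmin qmax w)⟩ _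
  have hge : lagrangian A d vmin vmax qmin qmax z (qOf A z) ≤
      dualFun A d vmin vmax qmin qmax z :=
    le_ciInf (lagrangian_qOf_le hA d vmin vmax qmin qmax z)
  rw [lagrangian_qOf_eq_add_gradD] at hle
  linarith

/-- Claim 3: if the set Z* of maximizers of the dual function over ℝ₊^{4N} is nonempty,
then for every z* ∈ Z* and every z ∈ ℝ₊^{4N} with z ∉ Z* one has ⟨∇D(z), z* − z⟩ > 0. -/
theorem stmt_17 (N : ℕ) (hN : 0 < N) (A : Matrix (Fin N) (Fin N) ℝ) (hA : A.PosDef)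
    (d vmin vmax qmin qmax : Fin N → ℝ)
    (hv : ∀ i, vmin i ≤ vmax i) (hq : ∀ i, qmin i ≤ qmax i)
    (zstar : Fin 4 → Fin N → ℝ)
    (hzstar : zstar ∈ {w : Fin 4 → Fin N → ℝ | (∀ b i, 0 ≤ w b i) ∧
      ∀ u : Fin 4 → Fin N → ℝ, (∀ b i, 0 ≤ u b i) →
        dualFun A d vmin vmax qmin qmax u ≤ dualFun A d vmin vmax qmin qmax w})
    (z : Fin 4 → Fin N → ℝ) (hz : ∀ b i, 0 ≤ z b i)
    (hznot : z ∉ {w : Fin 4 → Fin N → ℝ | (∀ b i, 0 ≤ w b i) ∧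
      ∀ u : Fin 4 → Fin N → ℝ, (∀ b i, 0 ≤ u b i) →
        dualFun A d vmin vmax qmin qmax u ≤ dualFun A d vmin vmax qmin qmax w}) :
    0 < ∑ b, ∑ i,
      gradD A d vmin vmax qmin qmax z b i * (zstar b i - z b i) := by
  have hlt : dualFun A d vmin vmax qmin qmax z < dualFun A d vmin vmax qmin qmax zstar := by
    by_contra! hle
    exact hznot ⟨hz, fun u hu => (hzstar.2 u hu).trans hle⟩
  linarith [dualFun_le_add_gradD hA d vmin vmax qmin qmax z zstar]

end
end

section
/- Let (z^k)_{k∈ℕ} be a sequence in ℝ₊^{4N} with lim_{k→∞} V(z^k) = 0, and let i ∈ {1,…,4N} be an index such that lim_{k→∞} z^k_i = 0. Then limsup_{k→∞} ∇_i D(z^k) ≤ 0. -/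
open Matrix

noncomputable section

/-- Every coordinate of a vector in ℝ^{4N} is bounded in absolute value by its Euclidean norm. -/
lemma abs_apply_le_enorm4 {N : ℕ} (w : Fin 4 → Fin N → ℝ) (b : Fin 4) (i : Fin N) :
    |w b i| ≤ enorm4 w := by
  refine Real.abs_le_sqrt ?_
  calc w b i ^ 2 ≤ ∑ j, w b j ^ 2 :=
        Finset.single_le_sum (f := fun j => w b j ^ 2) (fun _ _ => sq_nonneg _)
          (Finset.mem_univ i)
    _ ≤ ∑ c, ∑ j, w c j ^ 2 :=
        Finset.single_le_sum (f := fun c => ∑ j, w c j ^ 2)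
          (fun _ _ => Finset.sum_nonneg fun _ _ => sq_nonneg _) (Finset.mem_univ b)

/-- Every component of the dual gradient is bounded above by V(z). -/
lemma gradD_apply_le_Vfun {N : ℕ} (A : Matrix (Fin N) (Fin N) ℝ)
    (d vmin vmax qmin qmax : Fin N → ℝ) (z : Fin 4 → Fin N → ℝ) (b : Fin 4) (i : Fin N) :
    gradD A d vmin vmax qmin qmax z b i ≤ Vfun A d vmin vmax qmin qmax z := by
  have h := abs_apply_le_enorm4
    (fun b i => z b i - max (z b i + gradD A d vmin vmax qmin qmax z b i) 0) b i
  have h' := le_max_left (z b i + gradD A d vmin vmax qmin qmax z b i) 0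
  have h'' := (abs_le.mp h).1
  simp only [Vfun]
  linarith

/-- A real sequence dominated by a null sequence has nonpositive real-valued limsup, also when it
is unbounded below, where that limsup takes the default value `0`. -/
lemma limsup_nonpos_of_le_of_tendsto_zero {u v : ℕ → ℝ} (huv : ∀ k, u k ≤ v k)
    (hv : Filter.Tendsto v Filter.atTop (nhds 0)) : Filter.limsup u Filter.atTop ≤ 0 := by
  rw [Filter.limsup_eq]
  by_cases hb : BddBelow {a | ∀ᶠ k in Filter.atTop, u k ≤ a}
  · refine le_of_forall_pos_le_add fun ε hε => ?_
    rw [zero_add]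
    refine csInf_le hb ?_
    filter_upwards [hv.eventually_lt_const hε] with k hk
    exact (huv k).trans hk.le
  · exact (Real.sInf_of_not_bddBelow hb).le

/-- Claim 1: if (z^k) ⊆ ℝ₊^{4N} with V(z^k) → 0, and the i-th coordinate (here the
coordinate (b, i) of the four-block representation) satisfies z^k_i → 0, then
limsup_k ∇_i D(z^k) ≤ 0. -/
theorem stmt_18 (N : ℕ) (hN : 0 < N) (A : Matrix (Fin N) (Fin N) ℝ) (hA : A.PosDef)
    (d vmin vmax qmin qmax : Fin N → ℝ)
    (hv : ∀ i, vmin i ≤ vmax i) (hq : ∀ i, qmin i ≤ qmax i)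
    (zk : ℕ → Fin 4 → Fin N → ℝ) (hzk : ∀ k b i, 0 ≤ zk k b i)
    (hV : Filter.Tendsto (fun k => Vfun A d vmin vmax qmin qmax (zk k))
      Filter.atTop (nhds 0))
    (b : Fin 4) (i : Fin N)
    (hi : Filter.Tendsto (fun k => zk k b i) Filter.atTop (nhds 0)) :
    Filter.limsup (fun k => gradD A d vmin vmax qmin qmax (zk k) b i) Filter.atTop
      ≤ 0 := by
  exact limsup_nonpos_of_le_of_tendsto_zero
    (fun k => gradD_apply_le_Vfun A d vmin vmax qmin qmax (zk k) b i) hV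

end
end
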